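/- For every nonnegative integer n and complex numbers q, x with no vanishing denominators: sum over k from 0 to n of (q^{-3n};q^3)_k * (x;q)_k (q/x;q)_k / ((q;q)_k (-q;q)_k (q^{3/2};q)_k (-q^{1/2};q)_k (q^{-1-3n};q)_k) * q^k equals (1-x)/((1+q^{1/2})(1-xq^{-1/2})) * ((q^3 x;q^3)_n (q^3/x;q^3)_n)/((q^2;q^3)_n (q^4;q^3)_n) + (1-xq^{-1})/((1+q^{-1/2})(1-xq^{-1/2})) * ((q^2 x;q^3)_n (q^4/x;q^3)_n)/((q^2;q^3)_n (q^4;q^3)_n). -/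

import Mathlib

/-- q-Pochhammer symbol `(a; q)_k`. -/
noncomputable def qpoch (a q : ℂ) (k : ℕ) : ℂ := ∏ j ∈ Finset.range k, (1 - a * q ^ j)

/-!
For `n = k + m`, the identity
`(1 - q^(3n+3) x) (1 - q^(3n+3) / x) = (1 - q^(3m+2k+2)) (1 - q^(3m+4k+4))
  + q^(3m+2k+2) (1 - q^(k+1) x) (1 - q^(k+1) / x)`
expands `(q^3 x; q^3)_n (q^3/x; q^3)_n` in the basis `(q x; q)_k (q/x; q)_k`, with coefficients that
obey a Pascal-type recurrence and have the closed form
`q^(k(k+1)) (q^(2k+2); q)_{3m} / (q^3; q^3)_m`. The two products in the theorem are this expansion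
at `x` and at `x/q`, and their basis elements combine into multiples of `(x; q)_k (q/x; q)_k`.
The closed form is `0/0` at some roots of unity `q` that the theorem allows, so the coefficients are
defined by the recurrence, and their relation to the summand is extended to every `q` by continuity.
-/

open Finset

@[simp]
theorem qpoch_zero (a q : ℂ) : qpoch a q 0 = 1 := by simp [qpoch]

theorem qpoch_succ (a q : ℂ) (k : ℕ) : qpoch a q (k + 1) = qpoch a q k * (1 - a * q ^ k) :=
  prod_range_succ _ k

theorem qpoch_add (a q : ℂ) (k l : ℕ) :
    qpoch a q (k + l) = qpoch a q k * qpoch (a * q ^ k) q l := by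
  simp only [qpoch, prod_range_add, pow_add, mul_assoc]

theorem qpoch_succ' (a q : ℂ) (k : ℕ) : qpoch a q (k + 1) = (1 - a) * qpoch (a * q) q k := by
  rw [add_comm, qpoch_add]
  simp [qpoch_succ]

theorem qpoch_three_mul (a q : ℂ) (n : ℕ) :
    qpoch a q (3 * n) =
      qpoch a (q ^ 3) n * qpoch (a * q) (q ^ 3) n * qpoch (a * q ^ 2) (q ^ 3) n := by
  induction n with
  | zero => simp
  | succ n ih =>
    simp only [mul_add_one, qpoch_succ, ih, ← pow_mul]
    ring

theorem qpoch_inv_mul {a q : ℂ} (ha : a ≠ 0) (hq : q ≠ 0) (k : ℕ) :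
    qpoch (a * q ^ k)⁻¹ q k * ((-a) ^ k * q ^ (k + 1).choose 2) = qpoch (a * q) q k := by
  induction k with
  | zero => simp
  | succ k ih =>
    have hshift : (a * q ^ (k + 1))⁻¹ * q = (a * q ^ k)⁻¹ := by
      rw [pow_succ, ← mul_assoc, mul_inv, inv_mul_cancel_right₀ hq]
    have hchoose : (k + 2).choose 2 = (k + 1) + (k + 1).choose 2 := by
      simp [Nat.choose_succ_succ' (k + 1) 1]
    have hfactor : (1 - (a * q ^ (k + 1))⁻¹) * (-a * q ^ (k + 1)) = 1 - a * q * q ^ k := by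
      have hinv := inv_mul_cancel₀ (mul_ne_zero ha (pow_ne_zero (k + 1) hq))
      linear_combination hinv
    rw [qpoch_succ', hshift, hchoose, qpoch_succ, ← ih, ← hfactor]
    ring

theorem continuous_qpoch {f g : ℂ → ℂ} (hf : Continuous f) (hg : Continuous g) (k : ℕ) :
    Continuous fun z ↦ qpoch (f z) (g z) k := by
  unfold qpoch
  fun_prop

theorem qpoch_pow_self_ne_zero {q : ℂ} (hq : ‖q‖ ≠ 1) {l : ℕ} (hl : l ≠ 0) (k : ℕ) :
    qpoch (q ^ l) (q ^ l) k ≠ 0 := by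
  refine prod_ne_zero_iff.2 fun j _ ↦ sub_ne_zero.2 fun h ↦ hq ?_
  refine (pow_eq_one_iff_of_nonneg (norm_nonneg q) (mul_ne_zero hl j.succ_ne_zero)).1 ?_
  rw [← norm_pow, pow_mul, pow_succ', ← h, norm_one]

/-- The coefficient of `(qx; q)ₖ (q/x; q)ₖ` in the expansion of `(q³x; q³)ₙ (q³/x; q³)ₙ`, indexed by
`k` and `m = n - k` so that no subtraction occurs. -/
noncomputable def cubicCoeff (q : ℂ) : ℕ → ℕ → ℂ
  | 0, 0 => 1
  | 0, m + 1 => (1 - q ^ (3 * m + 2)) * (1 - q ^ (3 * m + 4)) * cubicCoeff q 0 m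
  | k + 1, 0 => q ^ (2 * k + 2) * cubicCoeff q k 0
  | k + 1, m + 1 =>
    (1 - q ^ (3 * m + 2 * (k + 1) + 2)) * (1 - q ^ (3 * m + 4 * (k + 1) + 4)) *
        cubicCoeff q (k + 1) m +
      q ^ (3 * (m + 1) + 2 * k + 2) * cubicCoeff q k (m + 1)

namespace cubicCoeff

theorem continuous (k m : ℕ) : Continuous fun q ↦ cubicCoeff q k m := by
  induction k, m using cubicCoeff.induct <;> simp only [cubicCoeff] <;> fun_prop

theorem mul_qpoch (q : ℂ) (k m : ℕ) :
    cubicCoeff q k m * qpoch (q ^ 3) (q ^ 3) m =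
      q ^ (k * (k + 1)) * qpoch (q ^ (2 * k + 2)) q (3 * m) := by
  induction k, m using cubicCoeff.induct with
  | case1 => simp [cubicCoeff]
  | case2 m ih =>
    simp only [Nat.succ_eq_add_one, cubicCoeff, mul_add_one, qpoch_succ] at ih ⊢
    linear_combination
      (1 - q ^ (3 * m + 2)) * (1 - q ^ (3 * m + 4)) * (1 - q ^ 3 * (q ^ 3) ^ m) * ih
  | case3 k ih =>
    simp only [Nat.succ_eq_add_one, cubicCoeff, mul_zero, qpoch_zero, mul_one] at ih ⊢
    rw [ih]
    ring
  | case4 k m ih_m ih_k =>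
    have hpoch : qpoch (q ^ (2 * k + 2)) q (3 * (m + 1)) =
        (1 - q ^ (2 * k + 2)) * (1 - q ^ (2 * k + 3)) *
          (qpoch (q ^ (2 * (k + 1) + 2)) q (3 * m) * (1 - q ^ (3 * m + 2 * k + 4))) := by
      rw [mul_add_one, qpoch_succ', qpoch_succ', qpoch_succ]
      ring_nf
    rw [hpoch] at ih_k
    simp only [Nat.succ_eq_add_one, cubicCoeff, mul_add_one, qpoch_succ] at ih_m ih_k ⊢
    linear_combination
      (1 - q ^ (3 * m + 2 * (k + 1) + 2)) * (1 - q ^ (3 * m + 4 * (k + 1) + 4)) *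
          (1 - q ^ 3 * (q ^ 3) ^ m) * ih_m +
        q ^ (3 * (m + 1) + 2 * k + 2) * ih_k

theorem mul_qpoch_mul_qpoch (q : ℂ) (k m : ℕ) :
    cubicCoeff q k m * (qpoch (q ^ 2) q (2 * k) * qpoch (q ^ (3 * m + 2 * k + 2)) q k) =
      q ^ (k * (k + 1)) * qpoch (q ^ (3 * m + 3)) (q ^ 3) k *
        (qpoch (q ^ 2) (q ^ 3) (k + m) * qpoch (q ^ 4) (q ^ 3) (k + m)) := by
  have hdense : Dense {q : ℂ | ‖q‖ = 1}ᶜ := by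
    rw [← interior_eq_empty_iff_dense_compl, ← interior_sphere (0 : ℂ) one_ne_zero]
    simp [Metric.sphere]
  revert q
  refine congrFun (Continuous.ext_on hdense ?_ ?_ fun q hq ↦ ?_)
  · exact (continuous k m).mul ((continuous_qpoch (by fun_prop) (by fun_prop) _).mul
      (continuous_qpoch (by fun_prop) (by fun_prop) _))
  · exact ((continuous_pow _).mul (continuous_qpoch (by fun_prop) (by fun_prop) _)).mul
      ((continuous_qpoch (by fun_prop) (by fun_prop) _).mul
        (continuous_qpoch (by fun_prop) (by fun_prop) _))
  have hsplit : qpoch (q ^ 2) q (3 * (k + m)) =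
      qpoch (q ^ 2) q (2 * k) * qpoch (q ^ (2 * k + 2)) q (3 * m) *
        qpoch (q ^ (3 * m + 2 * k + 2)) q k := by
    rw [show 3 * (k + m) = 2 * k + 3 * m + k by ring, qpoch_add, qpoch_add]
    ring_nf
  have htrisect : qpoch (q ^ 2) q (3 * (k + m)) =
      qpoch (q ^ 2) (q ^ 3) (k + m) *
        (qpoch (q ^ 3) (q ^ 3) m * qpoch (q ^ (3 * m + 3)) (q ^ 3) k) *
          qpoch (q ^ 4) (q ^ 3) (k + m) := by
    rw [qpoch_three_mul, ← pow_succ, ← pow_add, add_comm k m, qpoch_add (q ^ 3)]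
    ring_nf
  apply mul_right_cancel₀ (qpoch_pow_self_ne_zero hq three_ne_zero m)
  linear_combination
    (qpoch (q ^ 2) q (2 * k) * qpoch (q ^ (3 * m + 2 * k + 2)) q k) * mul_qpoch q k m +
      q ^ (k * (k + 1)) * (htrisect - hsplit)

theorem mul_qpoch_inv {q : ℂ} (hq : q ≠ 0) (k m : ℕ) :
    cubicCoeff q k m * (qpoch (q ^ 2) q (2 * k) * qpoch (q ^ (3 * (k + m) + 1))⁻¹ q k) =
      qpoch (q ^ (3 * (k + m)))⁻¹ (q ^ 3) k * q ^ k *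
        (qpoch (q ^ 2) (q ^ 3) (k + m) * qpoch (q ^ 4) (q ^ 3) (k + m)) := by
  have hcube := qpoch_inv_mul (pow_ne_zero (3 * m) hq) (pow_ne_zero 3 hq) k
  have hone := qpoch_inv_mul (pow_ne_zero (3 * m + 2 * k + 1) hq) hq k
  have hchoose : (k + 1) * k = (k + 1).choose 2 * 2 := by
    simpa using Nat.add_one_mul_choose_eq k 1
  have hpow : q ^ k * ((q ^ (3 * m + 2 * k + 1)) ^ k * q ^ (k + 1).choose 2) =
      q ^ (k * (k + 1)) * ((q ^ (3 * m)) ^ k * (q ^ 3) ^ (k + 1).choose 2) := by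
    simp only [← pow_mul, ← pow_add]
    congr 1
    linarith
  have hne : (-1) ^ k * (q ^ (3 * m + 2 * k + 1)) ^ k * q ^ (k + 1).choose 2 ≠ 0 := by simp [hq]
  rw [← pow_mul, ← pow_add, ← pow_add, show 3 * m + 3 * k = 3 * (k + m) by ring, neg_pow] at hcube
  rw [← pow_add, ← pow_succ, show 3 * m + 2 * k + 1 + k = 3 * (k + m) + 1 by ring, neg_pow] at hone
  have hcoeff := mul_qpoch_mul_qpoch q k m
  rw [← hcube, ← hone] at hcoeff
  apply mul_right_cancel₀ hne
  linear_combination hcoeff - qpoch (q ^ (3 * (k + m)))⁻¹ (q ^ 3) k *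
    (qpoch (q ^ 2) (q ^ 3) (k + m) * qpoch (q ^ 4) (q ^ 3) (k + m)) * (-1) ^ k * hpow

end cubicCoeff

theorem one_sub_mul_one_sub_div {x : ℂ} (hx : x ≠ 0) (q : ℂ) (k m : ℕ) :
    (1 - q ^ 3 * x * (q ^ 3) ^ (k + m)) * (1 - q ^ 3 / x * (q ^ 3) ^ (k + m)) =
      (1 - q ^ (3 * m + 2 * k + 2)) * (1 - q ^ (3 * m + 4 * k + 4)) +
        q ^ (3 * m + 2 * k + 2) * ((1 - q * x * q ^ k) * (1 - q / x * q ^ k)) := by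
  field_simp
  ring

theorem qpoch_cube_mul_qpoch_cube_div_eq_sum {x : ℂ} (hx : x ≠ 0) (q : ℂ) (n : ℕ) :
    qpoch (q ^ 3 * x) (q ^ 3) n * qpoch (q ^ 3 / x) (q ^ 3) n =
      ∑ p ∈ antidiagonal n, cubicCoeff q p.1 p.2 * (qpoch (q * x) q p.1 * qpoch (q / x) q p.1) := by
  induction n with
  | zero => simp [cubicCoeff]
  | succ n ih =>
    let φ k := qpoch (q * x) q k * qpoch (q / x) q k
    -- The two terms of the recurrence, extended by zero so that both reindex to `n + 1`.
    let u : ℕ × ℕ → ℂ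
      | (_, 0) => 0
      | (k, m + 1) =>
        (1 - q ^ (3 * m + 2 * k + 2)) * (1 - q ^ (3 * m + 4 * k + 4)) * (cubicCoeff q k m * φ k)
    let v : ℕ × ℕ → ℂ
      | (0, _) => 0
      | (k + 1, m) => q ^ (3 * m + 2 * k + 2) * (cubicCoeff q k m * φ (k + 1))
    calc
      _ = ∑ p ∈ antidiagonal n, (u (p.1, p.2 + 1) + v (p.1 + 1, p.2)) := by
        rw [qpoch_succ, qpoch_succ, mul_mul_mul_comm, ih, sum_mul]
        refine sum_congr rfl fun p hp ↦ ?_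
        rw [← mem_antidiagonal.1 hp, one_sub_mul_one_sub_div hx]
        simp only [u, v, φ, qpoch_succ]
        ring
      _ = ∑ p ∈ antidiagonal (n + 1), (u p + v p) := by
        rw [sum_add_distrib, sum_add_distrib, Nat.sum_antidiagonal_succ' (f := u),
          Nat.sum_antidiagonal_succ (f := v)]
        simp [u, v]
      _ = _ := by
        refine sum_congr rfl fun p hp ↦ ?_
        rcases p with ⟨_ | k, _ | m⟩
        · simp at hp
        all_goals
          simp only [u, v, φ, cubicCoeff]
          ring

section Quadratic

variable {q s : ℂ} (hs : s ^ 2 = q)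
include hs

theorem qpoch_mul_qpoch_neg_mul (k : ℕ) :
    qpoch q q k * qpoch (-q) q k * qpoch (q * s) q k * qpoch (-s) q k * (1 + s * q ^ k) =
      (1 + s) * qpoch (q ^ 2) q (2 * k) := by
  subst hs
  induction k with
  | zero => simp
  | succ k ih =>
    simp only [mul_add_one, qpoch_succ]
    linear_combination
      (1 - (s ^ 2) ^ 2 * (s ^ 2) ^ (2 * k)) * (1 - (s ^ 2) ^ 2 * (s ^ 2) ^ (2 * k + 1)) * ih

variable (hq : q ≠ 0)
include hq

theorem qpoch_div_mul_pow_eq_cubicCoeff {k m n : ℕ} (hn : k + m = n) (hs1 : 1 + s ≠ 0)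
    (hden : qpoch q q k * qpoch (-q) q k * qpoch (q * s) q k * qpoch (-s) q k *
      qpoch (q ^ (-1 - 3 * n : ℤ)) q k ≠ 0)
    (hden2 : qpoch (q ^ 2) (q ^ 3) n * qpoch (q ^ 4) (q ^ 3) n ≠ 0) :
    qpoch (q ^ (-(3 * n : ℤ))) (q ^ 3) k /
        (qpoch q q k * qpoch (-q) q k * qpoch (q * s) q k * qpoch (-s) q k *
          qpoch (q ^ (-1 - 3 * n : ℤ)) q k) * q ^ k =
      cubicCoeff q k m * (1 + s * q ^ k) /
        ((1 + s) * (qpoch (q ^ 2) (q ^ 3) n * qpoch (q ^ 4) (q ^ 3) n)) := by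
  have hzpow : q ^ (-(3 * n : ℤ)) = (q ^ (3 * n))⁻¹ := mod_cast zpow_neg q (3 * n : ℕ)
  have hzpow' : q ^ (-1 - 3 * n : ℤ) = (q ^ (3 * n + 1))⁻¹ := by
    rw [← neg_add', add_comm]
    exact mod_cast zpow_neg q (3 * n + 1 : ℕ)
  have hcoeff := cubicCoeff.mul_qpoch_inv hq k m
  rw [hn, ← hzpow, ← hzpow'] at hcoeff
  rw [div_mul_eq_mul_div, div_eq_div_iff hden (mul_ne_zero hs1 hden2)]
  linear_combination -(1 + s) * hcoeff - cubicCoeff q k m * qpoch (q ^ (-1 - 3 * n : ℤ)) q k *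
    qpoch_mul_qpoch_neg_mul hs k

variable {x : ℂ} (hx : x ≠ 0)
include hx

theorem one_sub_mul_qpoch_add (k : ℕ) :
    (1 - x) * (qpoch (q * x) q k * qpoch (q / x) q k) +
        s * (1 - x / q) * (qpoch x q k * qpoch (q ^ 2 / x) q k) =
      (1 - x / s) * ((1 + s * q ^ k) * (qpoch x q k * qpoch (q / x) q k)) := by
  have hleft : (1 - x) * qpoch (q * x) q k = qpoch x q k * (1 - x * q ^ k) := by
    rw [← qpoch_succ, qpoch_succ', mul_comm x]
  have hright : (1 - q / x) * qpoch (q ^ 2 / x) q k =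
      qpoch (q / x) q k * (1 - q / x * q ^ k) := by
    rw [← qpoch_succ, qpoch_succ', div_mul_eq_mul_div, ← sq]
  have hs0 : s ≠ 0 := by rintro rfl; simp [← hs] at hq
  have hflip : s * (1 - x / q) = -(x / s) * (1 - q / x) := by
    rw [← hs]
    field_simp
    ring
  have hfactor : 1 - x * q ^ k - x / s * (1 - q / x * q ^ k) = (1 - x / s) * (1 + s * q ^ k) := by
    rw [← hs]
    field_simp
    ring
  rw [hflip]
  linear_combination qpoch (q / x) q k * hleft - x / s * qpoch x q k * hright +
    qpoch x q k * qpoch (q / x) q k * hfactor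

theorem one_sub_mul_qpoch_cube_add_eq_sum (n : ℕ) :
    (1 - x) * (qpoch (q ^ 3 * x) (q ^ 3) n * qpoch (q ^ 3 / x) (q ^ 3) n) +
        s * (1 - x / q) * (qpoch (q ^ 2 * x) (q ^ 3) n * qpoch (q ^ 4 / x) (q ^ 3) n) =
      (1 - x / s) * ∑ p ∈ antidiagonal n,
        cubicCoeff q p.1 p.2 * ((1 + s * q ^ p.1) * (qpoch x q p.1 * qpoch (q / x) q p.1)) := by
  have hshift := qpoch_cube_mul_qpoch_cube_div_eq_sum (div_ne_zero hx hq) q n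
  rw [show q ^ 3 * (x / q) = q ^ 2 * x by field_simp,
    show q ^ 3 / (x / q) = q ^ 4 / x by field_simp,
    show q * (x / q) = x by field_simp, show q / (x / q) = q ^ 2 / x by field_simp] at hshift
  rw [qpoch_cube_mul_qpoch_cube_div_eq_sum hx, hshift, mul_sum, mul_sum, mul_sum, ← sum_add_distrib]
  refine sum_congr rfl fun p _ ↦ ?_
  linear_combination cubicCoeff q p.1 p.2 * one_sub_mul_qpoch_add hs hq hx p.1

end Quadratic

theorem q_gosper_second_ext_ell_one (n : ℕ) (q x s : ℂ) (hs : s ^ 2 = q)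
    (hq : q ≠ 0) (hx : x ≠ 0) (hxs : x ≠ s) (hx2 : x ^ 2 ≠ q) (hs1 : 1 + s ≠ 0)
    (hden : ∀ k ≤ n,
      qpoch q q k * qpoch (-q) q k * qpoch (q*s) q k * qpoch (-s) q k *
        qpoch (q ^ (-1 - 3*n : ℤ)) q k ≠ 0)
    (hden2 : qpoch (q^2) (q^3) n * qpoch (q^4) (q^3) n ≠ 0) :
    ∑ k ∈ Finset.range (n+1),
      qpoch (q ^ (-(3*n : ℤ))) (q^3) k * (qpoch x q k * qpoch (q/x) q k) /
        (qpoch q q k * qpoch (-q) q k * qpoch (q*s) q k * qpoch (-s) q k *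
          qpoch (q ^ (-1 - 3*n : ℤ)) q k) * q^k
      = (1 - x) / ((1 + s) * (1 - x/s)) *
          ((qpoch (q^3*x) (q^3) n * qpoch (q^3/x) (q^3) n) /
            (qpoch (q^2) (q^3) n * qpoch (q^4) (q^3) n))
        + (1 - x/q) / ((1 + 1/s) * (1 - x/s)) *
          ((qpoch (q^2*x) (q^3) n * qpoch (q^4/x) (q^3) n) /
            (qpoch (q^2) (q^3) n * qpoch (q^4) (q^3) n)) := by
  have hs0 : s ≠ 0 := by rintro rfl; simp [← hs] at hq
  have hxs' : 1 - x / s ≠ 0 := sub_ne_zero.2 fun h ↦ hxs (eq_of_div_eq_one h.symm)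
  have hs1' : 1 + 1 / s = (1 + s) / s := by field_simp; ring
  set P := qpoch (q ^ 2) (q ^ 3) n * qpoch (q ^ 4) (q ^ 3) n
  calc
    _ = ∑ p ∈ antidiagonal n, cubicCoeff q p.1 p.2 *
          ((1 + s * q ^ p.1) * (qpoch x q p.1 * qpoch (q / x) q p.1)) / ((1 + s) * P) := by
      rw [Nat.sum_antidiagonal_eq_sum_range_succ_mk]
      refine sum_congr rfl fun k hk ↦ ?_
      have hkn := Nat.le_of_lt_succ (mem_range.1 hk)
      linear_combination (qpoch x q k * qpoch (q / x) q k) *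
        qpoch_div_mul_pow_eq_cubicCoeff hs hq (Nat.add_sub_of_le hkn) hs1 (hden k hkn) hden2
    _ = ((1 - x) * (qpoch (q ^ 3 * x) (q ^ 3) n * qpoch (q ^ 3 / x) (q ^ 3) n) +
          s * (1 - x / q) * (qpoch (q ^ 2 * x) (q ^ 3) n * qpoch (q ^ 4 / x) (q ^ 3) n)) /
            ((1 - x / s) * ((1 + s) * P)) := by
      rw [one_sub_mul_qpoch_cube_add_eq_sum hs hq hx, mul_div_mul_left _ _ hxs', sum_div]
    _ = _ := by
      rw [hs1']
      field_simp
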